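/- Let M be a matrix over GF(2) with finite row set V and finite column set E, let γ : E → ℝ with γ_c ≠ 0 for a distinguished column c ∈ E, and let q be a nonzero real number. Let γ₁ > 0 and γ₂ > 0 satisfy (1 + q/γ_c) = (1 + q/γ₁)(1 + q/γ₂). Let M' be the series-extension matrix of M at c, and define γ' : E ∪ {e'} → ℝ by γ'_{e'} = γ₂, γ'_c = γ₁, and γ'_e = γ_e for all other e ∈ E. Then (1 + γ₁/q + γ₂/q) · Σ_{A⊆E} q^{−rank(M_A)} Π_{e∈A} γ_e = Σ_{A⊆E∪{e'}} q^{−rank(M'_A)} Π_{e∈A} γ'_e. -/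

import Mathlib

/-- The series-extension matrix `M'` of `M` at the column `c`: a new row `r' = Sum.inr ()`
and a new column `e' = Sum.inr ()` are added, with `M'_{r',c} = M'_{r',e'} = 1`,
`M'_{r',e} = 0` for `e ≠ c`, and `M'_{i,e'} = 0` for old rows `i`. -/
def seriesExt {V E : Type} [DecidableEq E] (M : Matrix V E (ZMod 2)) (c : E) :
    Matrix (V ⊕ Unit) (E ⊕ Unit) (ZMod 2) :=
  Matrix.of fun i e =>
    match i, e with
    | Sum.inl i, Sum.inl e => M i e
    | Sum.inl _, Sum.inr _ => 0
    | Sum.inr _, Sum.inl e => if e = c then 1 else 0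
    | Sum.inr _, Sum.inr _ => 1

/-!
In `M'`, deleting `e'` makes `c` a coloop, and contracting `e'` gives back `M`. Deletion–contraction
at `e'` therefore expresses the polynomial of `M'` through those of `M \ c` and `M`. Writing the
polynomial of `M` with weight `t` at `c` as `Z₀ + t * Z₁`, the polynomial of `M'` becomes
`(1 + γ₁ / q) * Z₀ + γ₂ / q * (Z₀ + γ₁ * Z₁)`, which is `(1 + γ₁ / q + γ₂ / q) * (Z₀ + γ c * Z₁)`
when `γ₁ * γ₂ = γ c * (q + γ₁ + γ₂)`, the series relation cleared of denominators.
-/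

open Module Submodule

section Span

theorem finrank_span_insert {K W : Type*} [DivisionRing K] [AddCommGroup W] [Module K W]
    {S : Set W} (hS : S.Finite) {w : W} (hw : w ∉ span K S) :
    finrank K (span K (insert w S)) = finrank K (span K S) + 1 := by
  have := FiniteDimensional.span_of_finite K hS
  have hw₀ : w ≠ 0 := fun h => hw (h ▸ zero_mem _)
  have hdisj : span K {w} ⊓ span K S = ⊥ :=
    (disjoint_span_singleton_of_notMem hw).symm.eq_bot
  have hdim := finrank_sup_add_finrank_inf_eq (span K {w}) (span K S)
  rwa [hdisj, finrank_bot, add_zero, finrank_span_singleton hw₀, ← span_insert,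
    add_comm 1] at hdim

theorem span_insert_image_add_smul {R W α : Type*} [Ring R] [AddCommGroup W] [Module R W]
    (w : W) (f : α → W) (a : α → R) (s : Set α) :
    span R (insert w ((fun i => f i + a i • w) '' s)) = span R (insert w (f '' s)) := by
  have hle (g h : α → W) (b : α → R) (hg : ∀ i, g i = h i + b i • w) :
      span R (insert w (g '' s)) ≤ span R (insert w (h '' s)) := by
    have hw : w ∈ span R (insert w (h '' s)) := mem_span_of_mem (Set.mem_insert _ _)
    refine span_le.2 (Set.insert_subset hw (Set.image_subset_iff.2 fun i hi => ?_))
    have hhi : h i ∈ span R (insert w (h '' s)) :=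
      mem_span_of_mem (Set.mem_insert_of_mem _ (Set.mem_image_of_mem h hi))
    simpa only [Set.mem_preimage, SetLike.mem_coe, hg i] using add_mem hhi (smul_mem _ _ hw)
  exact (hle _ f a fun _ => rfl).antisymm (hle f _ (-a) fun i => by simp)

end Span

section ExtendByZero

variable {V V' : Type*} {s : V → V'}

theorem finrank_span_extendByZero_image {R : Type*} [Ring R] (hs : Function.Injective s)
    (S : Set (V → R)) :
    finrank R (span R (Function.ExtendByZero.linearMap R s '' S)) = finrank R (span R S) := by
  have hinj : Function.Injective (Function.ExtendByZero.linearMap R s) := fun v w h =>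
    funext fun i => by simpa [hs.extend_apply] using congrFun h (s i)
  rw [span_image]
  exact (equivMapOfInjective _ hinj _).finrank_eq.symm

theorem finrank_span_insert_extendByZero_image {K : Type*} [DivisionRing K]
    (hs : Function.Injective s) {S : Set (V → K)} (hS : S.Finite) {w : V' → K} {j : V'}
    (hj : j ∉ Set.range s) (hw : w j ≠ 0) :
    finrank K (span K (insert w (Function.ExtendByZero.linearMap K s '' S))) =
      finrank K (span K S) + 1 := by
  have hmem : w ∉ span K (Function.ExtendByZero.linearMap K s '' S) := by
    rw [span_image]
    rintro ⟨v, -, rfl⟩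
    exact hw (Function.extend_apply' v (0 : V' → K) j hj)
  rw [finrank_span_insert (hS.image _) hmem, finrank_span_extendByZero_image hs]

end ExtendByZero

section SeriesExtension

variable {V E : Type*}

/-- The rank function `A ↦ rank (M_A)` of the linear matroid represented by the columns of `M`. -/
noncomputable def colRank {R : Type*} [CommSemiring R] (M : Matrix V E R) (A : Finset E) : ℕ :=
  (M.submatrix id fun a : {x // x ∈ A} => (a : E)).rank

theorem colRank_eq_finrank_span {R : Type*} [CommSemiring R] (M : Matrix V E R) (A : Finset E) :
    colRank M A = finrank R (span R (M.col '' A)) := by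
  rw [colRank, Matrix.rank_eq_finrank_span_cols, Set.image_eq_range]
  rfl

variable [DecidableEq E]

/-- The series extension at the column `c` of a matrix with arbitrary entries, with rows and
columns indexed as in `seriesExt`, which is the case of entries in `ZMod 2`. -/
def seriesExtension {R : Type*} [Zero R] [One R] (M : Matrix V E R) (c : E) :
    Matrix (V ⊕ Unit) (E ⊕ Unit) R :=
  Matrix.fromBlocks M 0 (Matrix.replicateRow Unit (Pi.single c 1)) 1

theorem seriesExt_eq_seriesExtension {V E : Type} [DecidableEq E] (M : Matrix V E (ZMod 2))
    (c : E) : seriesExt M c = seriesExtension M c := by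
  ext (i | i) (e | e) <;> simp [seriesExt, seriesExtension, Pi.single_apply]

theorem seriesExtension_col_inl {R : Type*} [Semiring R] (M : Matrix V E R) (c e : E) :
    (seriesExtension M c).col (Sum.inl e) =
      Function.ExtendByZero.linearMap R Sum.inl (M.col e) +
        (Pi.single c 1 : E → R) e • (seriesExtension M c).col (Sum.inr ()) := by
  ext (i | i) <;>
    simp [seriesExtension, Matrix.col, Sum.inl_injective.extend_apply, Function.extend_apply']

theorem seriesExtension_col_image_disjSum_empty {R : Type*} [Semiring R] (M : Matrix V E R)
    {c : E} {A : Finset E} (hc : c ∉ A) :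
    (seriesExtension M c).col '' (A.disjSum ∅ : Finset (E ⊕ Unit)) =
      Function.ExtendByZero.linearMap R Sum.inl '' (M.col '' A) := by
  have hcoe : ((A.disjSum ∅ : Finset (E ⊕ Unit)) : Set (E ⊕ Unit)) = Sum.inl '' (A : Set E) := by
    ext (e | u) <;> simp
  rw [hcoe, Set.image_image, Set.image_image]
  refine Set.image_congr fun e he => ?_
  rw [seriesExtension_col_inl, Pi.single_eq_of_ne (ne_of_mem_of_not_mem he hc), zero_smul,
    add_zero]

theorem colRank_seriesExtension_disjSum_empty {R : Type*} [CommRing R] (M : Matrix V E R) {c : E}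
    {A : Finset E} (hc : c ∉ A) :
    colRank (seriesExtension M c) (A.disjSum ∅) = colRank M A := by
  rw [colRank_eq_finrank_span, colRank_eq_finrank_span,
    seriesExtension_col_image_disjSum_empty M hc,
    finrank_span_extendByZero_image Sum.inl_injective]

variable {K : Type*} [Field K] (M : Matrix V E K)

theorem colRank_seriesExtension_insert_disjSum_empty {c : E} {A : Finset E} (hc : c ∉ A) :
    colRank (seriesExtension M c) ((insert c A).disjSum ∅) = colRank M A + 1 := by
  have hins : ((insert c A).disjSum ∅ : Finset (E ⊕ Unit)) =
      insert (Sum.inl c) (A.disjSum ∅) := by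
    ext (e | u) <;> simp
  have hrow : (seriesExtension M c).col (Sum.inl c) (Sum.inr ()) ≠ 0 := by
    simp [seriesExtension, Matrix.col]
  rw [colRank_eq_finrank_span, colRank_eq_finrank_span, hins, Finset.coe_insert,
    Set.image_insert_eq, seriesExtension_col_image_disjSum_empty M hc]
  exact finrank_span_insert_extendByZero_image Sum.inl_injective (A.finite_toSet.image _)
    (by simp) hrow

theorem colRank_seriesExtension_disjSum_univ (c : E) (A : Finset E) :
    colRank (seriesExtension M c) (A.disjSum Finset.univ) = colRank M A + 1 := by
  have hcoe : ((A.disjSum Finset.univ : Finset (E ⊕ Unit)) : Set (E ⊕ Unit)) =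
      insert (Sum.inr ()) (Sum.inl '' (A : Set E)) := by
    ext (e | u) <;> simp
  have hrow : (seriesExtension M c).col (Sum.inr ()) (Sum.inr ()) ≠ 0 := by
    simp [seriesExtension, Matrix.col]
  rw [colRank_eq_finrank_span, colRank_eq_finrank_span, hcoe, Set.image_insert_eq,
    Set.image_image, funext (seriesExtension_col_inl M c), span_insert_image_add_smul,
    ← Set.image_image (Function.ExtendByZero.linearMap K Sum.inl)]
  exact finrank_span_insert_extendByZero_image Sum.inl_injective (A.finite_toSet.image _)
    (by simp) hrow

end SeriesExtension

section MultivariateTutte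

variable {E F : Type*} [Fintype E] [Field F]

/-- The multivariate Tutte polynomial `Z̃(r; q, γ) = ∑ A, q ^ (-r A) * ∏ e ∈ A, γ e` attached to
a function `r` on subsets of `E`, which for a matroid is its rank function. -/
def multivariateTutte (r : Finset E → ℕ) (q : F) (γ : E → F) : F :=
  ∑ A : Finset E, q ^ (-(r A : ℤ)) * ∏ e ∈ A, γ e

theorem multivariateTutte_add_one {q : F} (hq : q ≠ 0) (r : Finset E → ℕ) (γ : E → F) :
    multivariateTutte (fun A => r A + 1) q γ = q⁻¹ * multivariateTutte r q γ := by
  simp only [multivariateTutte, Finset.mul_sum]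
  refine Finset.sum_congr rfl fun A _ => ?_
  rw [Nat.cast_succ, neg_add, zpow_add₀ hq, zpow_neg_one]
  ring

theorem multivariateTutte_sumElim_unit (r : Finset (E ⊕ Unit) → ℕ) (q : F) (γ : E → F) (t : F) :
    multivariateTutte r q (Sum.elim γ fun _ => t) =
      multivariateTutte (fun A => r (A.disjSum ∅)) q γ +
        t * multivariateTutte (fun A => r (A.disjSum Finset.univ)) q γ := by
  have huniv : (Finset.univ : Finset (Finset Unit)) = {∅, Finset.univ} := rfl
  have hsplit (f : Finset (E ⊕ Unit) → F) :
      ∑ A, f A = ∑ A : Finset E, (f (A.disjSum ∅) + f (A.disjSum Finset.univ)) := by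
    rw [← Finset.sumEquiv.symm.sum_comp, Fintype.sum_prod_type, huniv]
    exact Finset.sum_congr rfl fun A _ => Finset.sum_pair Finset.univ_nonempty.ne_empty.symm
  simp only [multivariateTutte, hsplit, Finset.mul_sum, ← Finset.sum_add_distrib]
  refine Finset.sum_congr rfl fun A _ => ?_
  simp only [Finset.prod_disjSum, Sum.elim_inl, Sum.elim_inr, Finset.prod_empty,
    Fintype.prod_unique]
  ring

variable [DecidableEq E]

theorem multivariateTutte_update_zero_congr {r s : Finset E → ℕ} {c : E}
    (h : ∀ A, c ∉ A → r A = s A) (q : F) (γ : E → F) :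
    multivariateTutte r q (Function.update γ c 0) =
      multivariateTutte s q (Function.update γ c 0) := by
  refine Finset.sum_congr rfl fun A _ => ?_
  by_cases hc : c ∈ A
  · simp only [Finset.prod_eq_zero hc (Function.update_self c 0 γ), mul_zero]
  · rw [h A hc]

/-- Setting the weight of `c` to zero deletes `c`, so this is deletion–contraction at `c`. -/
theorem multivariateTutte_update (r : Finset E → ℕ) (q : F) (γ : E → F) (c : E) (t : F) :
    multivariateTutte r q (Function.update γ c t) =
      multivariateTutte r q (Function.update γ c 0) +
        t * multivariateTutte (fun A => r (insert c A)) q (Function.update γ c 0) := by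
  have hsplit (f : Finset E → F) :
      ∑ A, f A = ∑ A ∈ (Finset.univ.erase c).powerset, (f A + f (insert c A)) := by
    rw [Finset.sum_add_distrib, ← Finset.sum_powerset_insert (Finset.notMem_erase c _),
      Finset.insert_erase (Finset.mem_univ c), Finset.powerset_univ]
  simp only [multivariateTutte, hsplit, Finset.mul_sum, ← Finset.sum_add_distrib]
  refine Finset.sum_congr rfl fun A hA => ?_
  have hc : c ∉ A := fun h => Finset.notMem_erase c _ (Finset.mem_powerset.1 hA h)
  simp only [Finset.prod_insert hc, Finset.prod_update_of_notMem hc, Function.update_self]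
  ring

theorem multivariateTutte_update_of_coloop {r s : Finset E → ℕ} {c : E} {q : F} (hq : q ≠ 0)
    (hdel : ∀ A, c ∉ A → r A = s A) (hins : ∀ A, c ∉ A → r (insert c A) = s A + 1)
    (γ : E → F) (t : F) :
    multivariateTutte r q (Function.update γ c t) =
      (1 + t / q) * multivariateTutte s q (Function.update γ c 0) := by
  rw [multivariateTutte_update, multivariateTutte_update_zero_congr hdel,
    multivariateTutte_update_zero_congr hins, multivariateTutte_add_one hq]
  ring

theorem multivariateTutte_of_series {r : Finset E → ℕ} {r' : Finset (E ⊕ Unit) → ℕ} {c : E}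
    (hdel : ∀ A, c ∉ A → r' (A.disjSum ∅) = r A)
    (hins : ∀ A, c ∉ A → r' ((insert c A).disjSum ∅) = r A + 1)
    (hcontract : ∀ A, r' (A.disjSum Finset.univ) = r A + 1)
    {γ : E → F} {q γ₁ γ₂ : F} (hq : q ≠ 0) (hser : γ₁ * γ₂ = γ c * (q + γ₁ + γ₂)) :
    (1 + γ₁ / q + γ₂ / q) * multivariateTutte r q γ =
      multivariateTutte r' q (Sum.elim (Function.update γ c γ₁) fun _ => γ₂) := by
  set Z₀ := multivariateTutte r q (Function.update γ c 0) with hZ₀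
  set Z₁ := multivariateTutte (fun A => r (insert c A)) q (Function.update γ c 0) with hZ₁
  have hZ : multivariateTutte r q γ = Z₀ + γ c * Z₁ := by
    rw [hZ₀, hZ₁, ← multivariateTutte_update, Function.update_eq_self]
  have hZ' : multivariateTutte r' q (Sum.elim (Function.update γ c γ₁) fun _ => γ₂) =
      (1 + γ₁ / q) * Z₀ + γ₂ * (q⁻¹ * (Z₀ + γ₁ * Z₁)) := by
    simp only [multivariateTutte_sumElim_unit, hcontract]
    rw [multivariateTutte_update_of_coloop hq hdel hins, multivariateTutte_add_one hq,
      multivariateTutte_update r q γ c γ₁]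
  rw [hZ, hZ']
  field_simp
  linear_combination -Z₁ * hser

end MultivariateTutte

theorem mul_eq_of_one_add_div_eq_mul {F : Type*} [Field F] {q x y z : F} (hq : q ≠ 0)
    (hx : x ≠ 0) (hy : y ≠ 0) (hz : z ≠ 0) (h : 1 + q / z = (1 + q / x) * (1 + q / y)) :
    x * y = z * (q + x + y) := by
  field_simp at h
  apply mul_left_cancel₀ hq
  linear_combination h

theorem stmt5_general {V E K F : Type*} [Fintype E] [DecidableEq E] [Field K] [Field F]
    (M : Matrix V E K) (c : E) {γ : E → F} {q γ₁ γ₂ : F} (hq : q ≠ 0)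
    (hser : γ₁ * γ₂ = γ c * (q + γ₁ + γ₂)) :
    (1 + γ₁ / q + γ₂ / q) * multivariateTutte (colRank M) q γ =
      multivariateTutte (colRank (seriesExtension M c)) q
        (Sum.elim (Function.update γ c γ₁) fun _ => γ₂) :=
  multivariateTutte_of_series (fun _ => colRank_seriesExtension_disjSum_empty M)
    (fun _ => colRank_seriesExtension_insert_disjSum_empty M)
    (colRank_seriesExtension_disjSum_univ M c) hq hser

/-- Series extension identity for the multivariate Tutte polynomial of a
binary matroid: with `γ₁ > 0`, `γ₂ > 0` satisfying
`1 + q/γ_c = (1 + q/γ₁)(1 + q/γ₂)`, we have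
`(1 + γ₁/q + γ₂/q)·Z̃(M;q,γ) = Z̃(M';q,γ')`. -/
theorem stmt5 {V E : Type} [Fintype V] [Fintype E] [DecidableEq E]
    (M : Matrix V E (ZMod 2)) (γ : E → ℝ) (q : ℝ) (hq : q ≠ 0) (c : E)
    (hγc : γ c ≠ 0)
    (γ₁ γ₂ : ℝ) (hγ₁ : 0 < γ₁) (hγ₂ : 0 < γ₂)
    (hser : 1 + q / γ c = (1 + q / γ₁) * (1 + q / γ₂))
    (γ' : E ⊕ Unit → ℝ)
    (hγ' : γ' = fun x => Sum.elim (fun e => if e = c then γ₁ else γ e) (fun _ => γ₂) x) :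
    (1 + γ₁ / q + γ₂ / q) *
        ∑ A : Finset E,
          q ^ (-((M.submatrix id (fun a : {x // x ∈ A} => (a : E))).rank : ℤ)) *
            ∏ e ∈ A, γ e
      = ∑ A : Finset (E ⊕ Unit),
          q ^ (-(((seriesExt M c).submatrix id
                (fun a : {x // x ∈ A} => (a : E ⊕ Unit))).rank : ℤ)) *
            ∏ e ∈ A, γ' e := by
  have hweight := mul_eq_of_one_add_div_eq_mul hq hγ₁.ne' hγ₂.ne' hγc hser
  simpa only [hγ', seriesExt_eq_seriesExtension, multivariateTutte, colRank,
    funext (Function.update_apply γ c γ₁)] using stmt5_general M c hq hweight
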